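/- Fix an integer k ≥ 1. For Lebesgue-almost every x ∈ (0,1) and every sparse infinite set P of primes, the quantity (1/p)·#{ n : 1 ≤ n < p, (n/p) = 1, and aₙ(x) = k } converges, as p → ∞ along P, to (1/(2 log 2)) · log( (k+1)²/(k(k+2)) ). -/

import Mathlib

open Filter MeasureTheory

open Classical in
/-- The Legendre symbol `(n/p)`. -/
noncomputable def legendre (p n : ℕ) : ℤ :=
  if (n : ZMod p) = 0 then 0 else if IsSquare ((n : ZMod p)) then 1 else -1

/-- The Gauss map `G(x) = 1/x - ⌊1/x⌋`. -/
noncomputable def gaussMap (x : ℝ) : ℝ := Int.fract x⁻¹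

/-- The `n`-th partial quotient `aₙ(x) = ⌊1/G^{n-1}(x)⌋` of the continued fraction
expansion of `x`, for `n ≥ 1`. -/
noncomputable def partialQuotient (n : ℕ) (x : ℝ) : ℤ := ⌊(gaussMap^[n - 1] x)⁻¹⌋

/-!
Let `xₙ` denote the Gauss orbit of `x`. Under the Gauss measure the orbit read backwards is a Markov
chain: given `xₙ₊₁ = y`, the point `xₙ` equals `1 / (j + 1 + y)` with an explicit probability. The
conditional expectation operator `T` of this chain contracts Lipschitz constants on `[0, 1]` by the
factor `23 / 24`. Hence, for arbitrary weights bounded by `1`, a weighted sum along the orbit of the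
centred indicator of `{a₁ = k}` is a martingale with bounded differences plus a bounded corrector.
Hoeffding's lemma gives sub-Gaussian tails with variance proxy linear in the number of terms, so by
Borel–Cantelli the weighted averages tend to `0` almost surely, even when the weights change with
the number of terms. Taking the indicators of the quadratic residues modulo `p` as weights, only the
mean contributes, and half of the nonzero residues are squares.
-/

open Set ProbabilityTheory

open scoped NNReal ENNReal Topology

/-- The inverse branch `y ↦ 1 / (k + 1 + y)` of the Gauss map, onto the points of `(0, 1)` whose
first partial quotient is `k + 1`. -/
noncomputable def gaussBranch (k : ℕ) (y : ℝ) : ℝ := (k + 1 + y)⁻¹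

/-- The conditional probability, under the Gauss measure, that `x` lies in the range of
`gaussBranch k` given that `gaussMap x = y`. -/
noncomputable def gaussWeight (k : ℕ) (y : ℝ) : ℝ := (1 + y) / ((k + 1 + y) * (k + 2 + y))

/-- The Gauss–Kuzmin–Wirsing transfer operator, normalised with respect to the Gauss measure: the
conditional expectation of `f x` given that `gaussMap x = y`. -/
noncomputable def gaussTransfer (f : ℝ → ℝ) (y : ℝ) : ℝ :=
  ∑' k, gaussWeight k y * f (gaussBranch k y)

/-- The Gauss measure `dx / (log 2 * (1 + x))` on `(0, 1)`. -/
noncomputable def gaussMeasure : Measure ℝ :=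
  (volume.restrict (Ioo 0 1)).withDensity fun x => ENNReal.ofReal (Real.log 2 * (1 + x))⁻¹

/-- The Gauss–Kuzmin frequency of the partial quotient `k ≥ 1`. -/
noncomputable def gaussKuzminFreq (k : ℕ) : ℝ :=
  (Real.log 2)⁻¹ * Real.log ((k + 1) ^ 2 / (k * (k + 2)))

section Branches

variable {k : ℕ} {x y : ℝ}

lemma gaussBranch_mem_Icc (k : ℕ) (hy : 0 ≤ y) : gaussBranch k y ∈ Icc (0 : ℝ) 1 :=
  ⟨inv_nonneg.2 (by positivity), inv_le_one_of_one_le₀ (by linarith [k.cast_nonneg (α := ℝ)])⟩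

lemma gaussBranch_mem_Ioo (k : ℕ) (hy : 0 < y) : gaussBranch k y ∈ Ioo (0 : ℝ) 1 :=
  ⟨inv_pos.2 (by positivity), inv_lt_one_of_one_lt₀ (by linarith [k.cast_nonneg (α := ℝ)])⟩

lemma abs_gaussBranch_sub (k : ℕ) (hx : 0 ≤ x) (hy : 0 ≤ y) :
    |gaussBranch k x - gaussBranch k y| = |x - y| / ((k + 1 + x) * (k + 1 + y)) := by
  have h : gaussBranch k x - gaussBranch k y = (y - x) / ((k + 1 + x) * (k + 1 + y)) := by
    unfold gaussBranch
    field_simp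
    ring
  rw [h, abs_div, abs_sub_comm y x, abs_of_pos (a := (k + 1 + x) * (k + 1 + y)) (by positivity)]

lemma hasDerivAt_gaussBranch (k : ℕ) (hy : 0 < y) :
    HasDerivAt (gaussBranch k) (-1 / (k + 1 + y) ^ 2) y :=
  ((hasDerivAt_id y).const_add ((k : ℝ) + 1)).inv (by simp only [id]; positivity)

lemma measurable_gaussBranch (k : ℕ) : Measurable (gaussBranch k) := by
  unfold gaussBranch
  fun_prop

lemma floor_inv_gaussBranch (k : ℕ) (hy : y ∈ Ico (0 : ℝ) 1) :
    ⌊(gaussBranch k y)⁻¹⌋ = (k : ℤ) + 1 := by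
  rw [gaussBranch, inv_inv, Int.floor_eq_iff]
  push_cast
  constructor <;> linarith [hy.1, hy.2]

lemma gaussMap_gaussBranch (k : ℕ) (hy : y ∈ Ico (0 : ℝ) 1) : gaussMap (gaussBranch k y) = y := by
  rw [gaussMap, Int.fract, floor_inv_gaussBranch k hy, gaussBranch, inv_inv]
  push_cast
  ring

lemma gaussMap_mem_Ico (x : ℝ) : gaussMap x ∈ Ico (0 : ℝ) 1 :=
  ⟨Int.fract_nonneg _, Int.fract_lt_one _⟩

lemma measurable_gaussMap : Measurable gaussMap :=
  measurable_fract.comp measurable_inv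

lemma injOn_gaussBranch (k : ℕ) : InjOn (gaussBranch k) (Ioo 0 1) :=
  LeftInvOn.injOn (f₁' := gaussMap) fun _ hy => gaussMap_gaussBranch k (Ioo_subset_Ico_self hy)

lemma pairwise_disjoint_image_gaussBranch :
    Pairwise (Function.onFun Disjoint fun k => gaussBranch k '' Ioo 0 1) := by
  intro i j hij
  refine Set.disjoint_left.2 ?_
  rintro _ ⟨x, hx, rfl⟩ ⟨y, hy, hxy⟩
  have hfloor := floor_inv_gaussBranch i (Ioo_subset_Ico_self hx)
  rw [← hxy, floor_inv_gaussBranch j (Ioo_subset_Ico_self hy)] at hfloor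
  omega

lemma measurableSet_image_gaussBranch (k : ℕ) : MeasurableSet (gaussBranch k '' Ioo 0 1) :=
  measurableSet_Ioo.image_of_continuousOn_injOn
    (fun _ hx => (hasDerivAt_gaussBranch k hx.1).continuousAt.continuousWithinAt)
    (injOn_gaussBranch k)

lemma exists_gaussBranch_eq_of_irrational (hx : Irrational x) (hx01 : x ∈ Ioo (0 : ℝ) 1) :
    ∃ k, ∃ y ∈ Ioo (0 : ℝ) 1, gaussBranch k y = x := by
  have hfloor : 1 ≤ ⌊x⁻¹⌋ := by
    rw [Int.le_floor]
    exact_mod_cast ((one_lt_inv₀ hx01.1).2 hx01.2).le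
  obtain ⟨k, hk⟩ : ∃ k : ℕ, ⌊x⁻¹⌋ = k + 1 := ⟨(⌊x⁻¹⌋ - 1).toNat, by omega⟩
  have hfract : Int.fract x⁻¹ ≠ 0 := by
    rw [Ne, Int.fract_eq_zero_iff]
    rintro ⟨n, hn⟩
    exact hx.inv.ne_int n hn.symm
  refine ⟨k, Int.fract x⁻¹, ⟨(Int.fract_nonneg _).lt_of_ne' hfract, Int.fract_lt_one _⟩, ?_⟩
  have hsum : (k : ℝ) + 1 + Int.fract x⁻¹ = x⁻¹ := by
    simpa [hk] using Int.floor_add_fract x⁻¹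
  rw [gaussBranch, hsum, inv_inv]

lemma iUnion_image_gaussBranch_ae_eq :
    (⋃ k, gaussBranch k '' Ioo 0 1) =ᵐ[volume] Ioo (0 : ℝ) 1 := by
  have hirr : ∀ᵐ x : ℝ, Irrational x := (countable_range ((↑) : ℚ → ℝ)).ae_notMem volume
  filter_upwards [hirr] with x hx
  refine propext ⟨fun h => ?_, fun h => mem_iUnion.2 (exists_gaussBranch_eq_of_irrational hx h)⟩
  obtain ⟨k, y, hy, rfl⟩ := mem_iUnion.1 h
  exact gaussBranch_mem_Ioo k hy.1

end Branches

section Weights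

variable {x y : ℝ}

lemma gaussWeight_nonneg (k : ℕ) (hy : 0 ≤ y) : 0 ≤ gaussWeight k y := by
  unfold gaussWeight
  positivity

lemma sum_range_gaussWeight (n : ℕ) (hy : 0 ≤ y) :
    ∑ k ∈ Finset.range n, gaussWeight k y = 1 - (1 + y) / (n + 1 + y) := by
  induction n with
  | zero => simp [div_self (by positivity : 1 + y ≠ 0)]
  | succ n ih =>
    rw [Finset.sum_range_succ, ih, gaussWeight]
    push_cast
    field_simp
    ring

lemma hasSum_gaussWeight (hy : 0 ≤ y) : HasSum (fun k => gaussWeight k y) 1 := by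
  rw [hasSum_iff_tendsto_nat_of_nonneg fun k => gaussWeight_nonneg k hy]
  simp_rw [fun n => sum_range_gaussWeight n hy, add_assoc]
  have h : Tendsto (fun n : ℕ => (1 + y) / ((n : ℝ) + (1 + y))) atTop (𝓝 0) :=
    tendsto_const_nhds.div_atTop (tendsto_atTop_add_const_right _ _ tendsto_natCast_atTop_atTop)
  simpa using tendsto_const_nhds.sub h

lemma gaussWeight_le_one (k : ℕ) (hy : 0 ≤ y) : gaussWeight k y ≤ 1 :=
  le_hasSum (hasSum_gaussWeight hy) k fun i _ => gaussWeight_nonneg i hy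

lemma measurable_gaussWeight (k : ℕ) : Measurable (gaussWeight k) := by
  unfold gaussWeight
  fun_prop

lemma gaussWeight_zero (hy : 0 ≤ y) : gaussWeight 0 y = (2 + y)⁻¹ := by
  rw [gaussWeight, Nat.cast_zero]
  field_simp
  ring

lemma gaussWeight_one_right (k : ℕ) : gaussWeight k 1 = 2 / ((k + 2) * (k + 3)) := by
  rw [gaussWeight]
  ring_nf

lemma gaussWeight_sub (k : ℕ) (hx : 0 ≤ x) (hy : 0 ≤ y) :
    gaussWeight k x - gaussWeight k y =
      (x - y) * ((k * (k + 1) - (1 + x) * (1 + y)) /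
        ((k + 1 + x) * (k + 2 + x) * ((k + 1 + y) * (k + 2 + y)))) := by
  unfold gaussWeight
  field_simp
  ring

lemma abs_gaussWeight_sub_le_of_ne_zero {k : ℕ} (hk : k ≠ 0) (hx : x ∈ Icc (0 : ℝ) 1)
    (hy : y ∈ Icc (0 : ℝ) 1) :
    |gaussWeight k x - gaussWeight k y| ≤ |x - y| * (gaussWeight k 1 / 2) := by
  obtain ⟨hx0, hx1⟩ := hx
  obtain ⟨hy0, hy1⟩ := hy
  have hk1 : (1 : ℝ) ≤ k := by exact_mod_cast Nat.one_le_iff_ne_zero.2 hk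
  have hnum : |k * (k + 1) - (1 + x) * (1 + y)| ≤ (k : ℝ) * (k + 1) := by
    rw [abs_le]
    constructor <;> nlinarith [mul_nonneg hx0 hy0]
  rw [gaussWeight_sub k hx0 hy0, abs_mul, gaussWeight_one_right]
  refine mul_le_mul_of_nonneg_left ?_ (abs_nonneg _)
  rw [abs_div, abs_of_pos (a := _ * _ * (_ * _)) (by positivity)]
  calc |k * (k + 1) - (1 + x) * (1 + y)| / ((k + 1 + x) * (k + 2 + x) * ((k + 1 + y) * (k + 2 + y)))
      ≤ k * (k + 1) / ((k + 1 + 0) * (k + 2 + 0) * ((k + 1 + 0) * (k + 2 + 0))) := by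
        gcongr
    _ ≤ 2 / ((k + 2) * (k + 3)) / 2 := by
        rw [div_div, div_le_div_iff₀ (by positivity) (by positivity)]
        nlinarith [sq_nonneg (k : ℝ), pow_pos (zero_lt_one.trans_le hk1) 3]

lemma abs_gaussWeight_sub_le (k : ℕ) (hx : x ∈ Icc (0 : ℝ) 1) (hy : y ∈ Icc (0 : ℝ) 1) :
    |gaussWeight k x - gaussWeight k y| ≤ |x - y| := by
  rcases eq_or_ne k 0 with rfl | hk
  · have hx0 := hx.1
    have hy0 := hy.1
    rw [gaussWeight_zero hx0, gaussWeight_zero hy0, inv_sub_inv (by positivity) (by positivity),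
      abs_div, add_sub_add_left_eq_sub, abs_sub_comm y x]
    refine div_le_self (abs_nonneg _) ?_
    rw [abs_of_pos (by positivity)]
    nlinarith
  · refine (abs_gaussWeight_sub_le_of_ne_zero hk hx hy).trans
      (mul_le_of_le_one_right (abs_nonneg _) ?_)
    linarith [gaussWeight_le_one k zero_le_one]

lemma gaussWeight_mul_abs_gaussBranch_sub_le (k : ℕ) (hx : 0 ≤ x) (hy : 0 ≤ y) :
    gaussWeight k x * |gaussBranch k x - gaussBranch k y| ≤
      |x - y| * (gaussWeight k x / 4 + if k = 0 then 3 / 8 else 0) := by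
  have hw := gaussWeight_nonneg k hx
  rw [abs_gaussBranch_sub k hx hy, ← mul_div_assoc, mul_comm, mul_div_assoc]
  refine mul_le_mul_of_nonneg_left ?_ (abs_nonneg _)
  rcases eq_or_ne k 0 with rfl | hk
  · have hden : 1 ≤ (((0 : ℕ) : ℝ) + 1 + x) * ((0 : ℕ) + 1 + y) := by
      rw [Nat.cast_zero]
      nlinarith [mul_nonneg hx hy]
    have hhalf : gaussWeight 0 x ≤ 1 / 2 := by
      rw [gaussWeight_zero hx, ← one_div]
      gcongr
      linarith
    rw [if_pos rfl]
    linarith [div_le_self hw hden]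
  · have hk1 : (1 : ℝ) ≤ k := by exact_mod_cast Nat.one_le_iff_ne_zero.2 hk
    rw [if_neg hk, add_zero]
    gcongr
    nlinarith

lemma abs_gaussWeight_sub_mul_abs_gaussBranch_sub_le (k : ℕ) (hx : x ∈ Icc (0 : ℝ) 1)
    (hy : y ∈ Icc (0 : ℝ) 1) :
    |gaussWeight k x - gaussWeight k y| * |gaussBranch k y - gaussBranch 0 y| ≤
      |x - y| * (gaussWeight k 1 / 2 - if k = 0 then 1 / 6 else 0) := by
  rcases eq_or_ne k 0 with rfl | hk
  · rw [gaussWeight_zero zero_le_one]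
    norm_num
  · rw [if_neg hk, sub_zero]
    have hdist : |gaussBranch k y - gaussBranch 0 y| ≤ 1 := by
      simpa [Real.dist_eq] using
        Real.dist_le_of_mem_Icc_01 (gaussBranch_mem_Icc k hy.1) (gaussBranch_mem_Icc 0 hy.1)
    exact (mul_le_of_le_one_right (abs_nonneg _) hdist).trans
      (abs_gaussWeight_sub_le_of_ne_zero hk hx hy)

end Weights

section GaussMeasure

lemma integral_inv_add {a : ℝ} (ha : 0 < a) :
    ∫ x in (0 : ℝ)..1, (a + x)⁻¹ = Real.log (a + 1) - Real.log a := by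
  rw [intervalIntegral.integral_comp_add_left (fun x => x⁻¹), add_zero,
    integral_inv_of_pos ha (by linarith), Real.log_div (by positivity) ha.ne']

lemma intervalIntegrable_inv_add {a : ℝ} (ha : 0 < a) :
    IntervalIntegrable (fun x : ℝ => (a + x)⁻¹) volume 0 1 := by
  refine (ContinuousOn.inv₀ (by fun_prop) fun x hx => ?_).intervalIntegrable
  rw [uIcc_of_le zero_le_one] at hx
  linarith [hx.1]

lemma measurable_gaussDensity :
    Measurable fun x : ℝ => ENNReal.ofReal (Real.log 2 * (1 + x))⁻¹ := by
  fun_prop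

lemma lintegral_gaussMeasure {f : ℝ → ℝ≥0∞} (hf : Measurable f) :
    ∫⁻ x, f x ∂gaussMeasure =
      ∫⁻ x in Ioo 0 1, ENNReal.ofReal (Real.log 2 * (1 + x))⁻¹ * f x :=
  lintegral_withDensity_eq_lintegral_mul _ measurable_gaussDensity hf

lemma integral_gaussMeasure (f : ℝ → ℝ) :
    ∫ x, f x ∂gaussMeasure = ∫ x in (0 : ℝ)..1, (Real.log 2 * (1 + x))⁻¹ * f x := by
  rw [gaussMeasure, integral_withDensity_eq_integral_toReal_smul₀
    measurable_gaussDensity.aemeasurable (.of_forall fun x => ENNReal.ofReal_lt_top),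
    intervalIntegral.integral_of_le zero_le_one, integral_Ioc_eq_integral_Ioo]
  refine setIntegral_congr_fun measurableSet_Ioo fun x hx => ?_
  have hx0 : 0 < x := hx.1
  rw [smul_eq_mul, ENNReal.toReal_ofReal (by positivity)]

lemma absolutelyContinuous_gaussMeasure : volume.restrict (Ioo 0 1) ≪ gaussMeasure := by
  refine withDensity_absolutelyContinuous' measurable_gaussDensity.aemeasurable ?_
  filter_upwards [ae_restrict_mem measurableSet_Ioo] with x hx
  have hx0 : 0 < x := hx.1
  rw [ENNReal.ofReal_ne_zero_iff]
  positivity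

lemma ae_gaussMeasure_mem_Ioo : ∀ᵐ x ∂gaussMeasure, x ∈ Ioo (0 : ℝ) 1 :=
  (withDensity_absolutelyContinuous _ _).ae_le (ae_restrict_mem measurableSet_Ioo)

lemma ae_gaussMeasure_mem_Icc : ∀ᵐ x ∂gaussMeasure, x ∈ Icc (0 : ℝ) 1 :=
  ae_gaussMeasure_mem_Ioo.mono fun _ hx => Ioo_subset_Icc_self hx

instance : IsProbabilityMeasure gaussMeasure := by
  have hint : IntervalIntegrable (fun x => (Real.log 2 * (1 + x))⁻¹) volume 0 1 := by
    simp_rw [mul_inv]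
    exact (intervalIntegrable_inv_add one_pos).const_mul _
  rw [intervalIntegrable_iff_integrableOn_Ioo_of_le zero_le_one] at hint
  have : IsFiniteMeasure gaussMeasure := isFiniteMeasure_withDensity_ofReal hint.2
  have hmass : gaussMeasure.real univ = 1 := by
    have h := integral_gaussMeasure fun _ => 1
    simp_rw [mul_one, mul_inv, intervalIntegral.integral_const_mul, integral_inv_add one_pos,
      Real.log_one, sub_zero, one_add_one_eq_two, inv_mul_cancel₀ (Real.log_pos one_lt_two).ne',
      integral_const, smul_eq_mul, mul_one] at h
    exact h
  exact isProbabilityMeasure_iff_real.2 hmass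

lemma gaussDensity_mul_abs_deriv_gaussBranch (k : ℕ) {y : ℝ} (hy : 0 < y) :
    |-1 / (k + 1 + y) ^ 2| * (Real.log 2 * (1 + gaussBranch k y))⁻¹ =
      (Real.log 2 * (1 + y))⁻¹ * gaussWeight k y := by
  rw [abs_div, abs_neg, abs_one, abs_of_pos (by positivity), gaussBranch, gaussWeight]
  field_simp
  ring

/- The `k`-th summand comes from the change of variables `x = gaussBranch k y` on the cylinder
of points with first partial quotient `k + 1`. -/
lemma lintegral_gaussMeasure_eq_tsum {f : ℝ → ℝ≥0∞} (hf : Measurable f) :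
    ∫⁻ x, f x ∂gaussMeasure =
      ∫⁻ y, ∑' k, ENNReal.ofReal (gaussWeight k y) * f (gaussBranch k y) ∂gaussMeasure := by
  have hmeas (k : ℕ) : Measurable fun y =>
      ENNReal.ofReal (gaussWeight k y) * f (gaussBranch k y) :=
    (measurable_gaussWeight k).ennreal_ofReal.mul (hf.comp (measurable_gaussBranch k))
  have hcylinder (k : ℕ) :
      ∫⁻ x in gaussBranch k '' Ioo 0 1, ENNReal.ofReal (Real.log 2 * (1 + x))⁻¹ * f x =
        ∫⁻ y in Ioo 0 1, ENNReal.ofReal (Real.log 2 * (1 + y))⁻¹ *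
          (ENNReal.ofReal (gaussWeight k y) * f (gaussBranch k y)) := by
    rw [lintegral_image_eq_lintegral_abs_deriv_mul measurableSet_Ioo
      (fun y hy => (hasDerivAt_gaussBranch k hy.1).hasDerivWithinAt) (injOn_gaussBranch k)]
    refine setLIntegral_congr_fun measurableSet_Ioo fun y hy => ?_
    have hy0 : 0 < y := hy.1
    rw [← mul_assoc, ← mul_assoc, ← ENNReal.ofReal_mul (abs_nonneg _),
      ← ENNReal.ofReal_mul (by positivity), gaussDensity_mul_abs_deriv_gaussBranch k hy0]
  rw [lintegral_gaussMeasure hf, lintegral_gaussMeasure (Measurable.tsum hmeas),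
    ← setLIntegral_congr iUnion_image_gaussBranch_ae_eq,
    lintegral_iUnion measurableSet_image_gaussBranch pairwise_disjoint_image_gaussBranch]
  simp_rw [hcylinder, ← ENNReal.tsum_mul_left]
  exact (lintegral_tsum fun k => (measurable_gaussDensity.mul (hmeas k)).aemeasurable).symm

lemma integral_gaussWeight (k : ℕ) :
    ∫ y, gaussWeight k y ∂gaussMeasure = gaussKuzminFreq (k + 1) := by
  have hpartial : ∀ y ∈ uIcc (0 : ℝ) 1, (Real.log 2 * (1 + y))⁻¹ * gaussWeight k y =
      (Real.log 2)⁻¹ * ((k + 1 + y)⁻¹ - (k + 2 + y)⁻¹) := by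
    intro y hy
    rw [uIcc_of_le zero_le_one] at hy
    have hy0 : 0 ≤ y := hy.1
    unfold gaussWeight
    field_simp
    ring
  rw [integral_gaussMeasure, intervalIntegral.integral_congr hpartial,
    intervalIntegral.integral_const_mul,
    intervalIntegral.integral_sub (intervalIntegrable_inv_add (by positivity))
      (intervalIntegrable_inv_add (by positivity)),
    integral_inv_add (by positivity), integral_inv_add (by positivity), gaussKuzminFreq,
    Real.log_div (by positivity) (by positivity), Real.log_mul (by positivity) (by positivity),
    Real.log_pow]
  push_cast
  ring_nf

end GaussMeasure

section Transfer

variable {f g : ℝ → ℝ} {B : ℝ} {y : ℝ}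

lemma hasSum_gaussTransfer (hf : ∀ x ∈ Icc (0 : ℝ) 1, |f x| ≤ B) (hy : 0 ≤ y) :
    HasSum (fun k => gaussWeight k y * f (gaussBranch k y)) (gaussTransfer f y) := by
  refine Summable.hasSum (.of_norm_bounded ((hasSum_gaussWeight hy).summable.mul_right B) ?_)
  intro k
  rw [Real.norm_eq_abs, abs_mul, abs_of_nonneg (gaussWeight_nonneg k hy)]
  exact mul_le_mul_of_nonneg_left (hf _ (gaussBranch_mem_Icc k hy)) (gaussWeight_nonneg k hy)

lemma abs_gaussTransfer_le (hf : ∀ x ∈ Icc (0 : ℝ) 1, |f x| ≤ B) (hy : 0 ≤ y) :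
    |gaussTransfer f y| ≤ B := by
  refine (tsum_of_norm_bounded (f := fun k => gaussWeight k y * f (gaussBranch k y))
    ((hasSum_gaussWeight hy).mul_right B) fun k => ?_).trans_eq (one_mul B)
  rw [Real.norm_eq_abs, abs_mul, abs_of_nonneg (gaussWeight_nonneg k hy)]
  exact mul_le_mul_of_nonneg_left (hf _ (gaussBranch_mem_Icc k hy)) (gaussWeight_nonneg k hy)

lemma measurable_gaussTransfer (hf : Measurable f) : Measurable (gaussTransfer f) :=
  Measurable.tsum fun k => (measurable_gaussWeight k).mul (hf.comp (measurable_gaussBranch k))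

lemma gaussTransfer_const_mul_add {B' : ℝ} (hf : ∀ x ∈ Icc (0 : ℝ) 1, |f x| ≤ B)
    (hg : ∀ x ∈ Icc (0 : ℝ) 1, |g x| ≤ B') (c : ℝ) (hy : 0 ≤ y) :
    gaussTransfer (fun x => c * f x + g x) y = c * gaussTransfer f y + gaussTransfer g y := by
  refine HasSum.tsum_eq ?_
  simpa only [mul_add, mul_left_comm] using
    ((hasSum_gaussTransfer hf hy).mul_left c).add (hasSum_gaussTransfer hg hy)

lemma gaussTransfer_const (c : ℝ) (hy : 0 ≤ y) : gaussTransfer (fun _ => c) y = c :=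
  ((hasSum_gaussWeight hy).mul_right c).tsum_eq.trans (one_mul c)

lemma integrable_gaussMeasure_of_abs_le (hfm : Measurable f)
    (hf : ∀ x ∈ Icc (0 : ℝ) 1, |f x| ≤ B) : Integrable f gaussMeasure :=
  .of_bound hfm.aestronglyMeasurable B (ae_gaussMeasure_mem_Icc.mono hf)

lemma integral_gaussTransfer_of_nonneg (hfm : Measurable f) (hf0 : ∀ x ∈ Icc (0 : ℝ) 1, 0 ≤ f x)
    (hf : ∀ x ∈ Icc (0 : ℝ) 1, |f x| ≤ B) :
    ∫ x, gaussTransfer f x ∂gaussMeasure = ∫ x, f x ∂gaussMeasure := by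
  have hterm {y : ℝ} (hy : y ∈ Icc (0 : ℝ) 1) (k : ℕ) :
      0 ≤ gaussWeight k y * f (gaussBranch k y) :=
    mul_nonneg (gaussWeight_nonneg k hy.1) (hf0 _ (gaussBranch_mem_Icc k hy.1))
  have hnonneg : ∀ᵐ y ∂gaussMeasure, 0 ≤ gaussTransfer f y :=
    ae_gaussMeasure_mem_Icc.mono fun y hy => tsum_nonneg (hterm hy)
  rw [integral_eq_lintegral_of_nonneg_ae hnonneg
      (measurable_gaussTransfer hfm).aestronglyMeasurable,
    integral_eq_lintegral_of_nonneg_ae (ae_gaussMeasure_mem_Icc.mono hf0)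
      hfm.aestronglyMeasurable, lintegral_gaussMeasure_eq_tsum hfm.ennreal_ofReal]
  congr 1
  refine lintegral_congr_ae (ae_gaussMeasure_mem_Icc.mono fun y hy => ?_)
  dsimp only
  rw [gaussTransfer, ENNReal.ofReal_tsum_of_nonneg (hterm hy)
    (hasSum_gaussTransfer hf hy.1).summable]
  simp_rw [fun k => ENNReal.ofReal_mul (q := f (gaussBranch k y)) (gaussWeight_nonneg k hy.1)]

lemma integral_gaussTransfer (hfm : Measurable f) (hf : ∀ x ∈ Icc (0 : ℝ) 1, |f x| ≤ B) :
    ∫ x, gaussTransfer f x ∂gaussMeasure = ∫ x, f x ∂gaussMeasure := by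
  have hB : ∀ x ∈ Icc (0 : ℝ) 1, |B| ≤ |B| := fun _ _ => le_rfl
  have hshift : ∀ᵐ y ∂gaussMeasure,
      gaussTransfer (fun x => 1 * f x + B) y = gaussTransfer f y + B :=
    ae_gaussMeasure_mem_Icc.mono fun y hy => by
      rw [gaussTransfer_const_mul_add hf hB 1 hy.1, gaussTransfer_const B hy.1, one_mul]
  have hnonneg := integral_gaussTransfer_of_nonneg (f := fun x => 1 * f x + B) (B := B + |B|)
    (by fun_prop) (fun x hx => by linarith [(abs_le.1 (hf x hx)).1])
    fun x hx => by rw [one_mul]; exact (abs_add_le _ _).trans (by gcongr; exact hf x hx)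
  rw [integral_congr_ae hshift, integral_add (integrable_gaussMeasure_of_abs_le
      (measurable_gaussTransfer hfm) fun y hy => abs_gaussTransfer_le hf hy.1)
      (integrable_const B)] at hnonneg
  simp_rw [one_mul] at hnonneg
  rw [integral_add (integrable_gaussMeasure_of_abs_le hfm hf) (integrable_const B)] at hnonneg
  exact add_right_cancel hnonneg

/- Both families of weights have total mass `1`, so a constant may be subtracted from `f`. Taking
it to be the value on branch `0` removes the term in which the weights vary most. -/
lemma hasSum_gaussTransfer_sub (hf : ∀ x ∈ Icc (0 : ℝ) 1, |f x| ≤ B) {x y : ℝ} (hx : 0 ≤ x)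
    (hy : 0 ≤ y) :
    HasSum (fun k => gaussWeight k x * (f (gaussBranch k x) - f (gaussBranch k y)) +
        (gaussWeight k x - gaussWeight k y) * (f (gaussBranch k y) - f (gaussBranch 0 y)))
      (gaussTransfer f x - gaussTransfer f y) := by
  have h := ((hasSum_gaussTransfer hf hx).sub (hasSum_gaussTransfer hf hy)).sub
    (((hasSum_gaussWeight hx).sub (hasSum_gaussWeight hy)).mul_right (f (gaussBranch 0 y)))
  rw [sub_self, zero_mul, sub_zero] at h
  refine h.congr_fun fun k => ?_
  ring

lemma abs_gaussTransfer_sub_summand_le {K : ℝ≥0} (hf : LipschitzOnWith K f (Icc 0 1)) (k : ℕ)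
    {x y : ℝ} (hx : x ∈ Icc (0 : ℝ) 1) (hy : y ∈ Icc (0 : ℝ) 1) :
    |gaussWeight k x * (f (gaussBranch k x) - f (gaussBranch k y)) +
        (gaussWeight k x - gaussWeight k y) * (f (gaussBranch k y) - f (gaussBranch 0 y))| ≤
      K * |x - y| * ((gaussWeight k x / 4 + if k = 0 then 3 / 8 else 0) +
        (gaussWeight k 1 / 2 - if k = 0 then 1 / 6 else 0)) := by
  have hfdist {u v : ℝ} (hu : u ∈ Icc (0 : ℝ) 1) (hv : v ∈ Icc (0 : ℝ) 1) :
      |f u - f v| ≤ K * |u - v| := hf.dist_le_mul u hu v hv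
  refine (abs_add_le _ _).trans ?_
  rw [abs_mul, abs_mul, abs_of_nonneg (gaussWeight_nonneg k hx.1), mul_add]
  refine add_le_add ?_ ?_
  · calc gaussWeight k x * |f (gaussBranch k x) - f (gaussBranch k y)|
        ≤ gaussWeight k x * (K * |gaussBranch k x - gaussBranch k y|) :=
          mul_le_mul_of_nonneg_left
            (hfdist (gaussBranch_mem_Icc k hx.1) (gaussBranch_mem_Icc k hy.1))
            (gaussWeight_nonneg k hx.1)
      _ = K * (gaussWeight k x * |gaussBranch k x - gaussBranch k y|) := mul_left_comm _ _ _
      _ ≤ K * |x - y| * (gaussWeight k x / 4 + if k = 0 then 3 / 8 else 0) := by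
          rw [mul_assoc]
          exact mul_le_mul_of_nonneg_left
            (gaussWeight_mul_abs_gaussBranch_sub_le k hx.1 hy.1) K.coe_nonneg
  · calc |gaussWeight k x - gaussWeight k y| * |f (gaussBranch k y) - f (gaussBranch 0 y)|
        ≤ |gaussWeight k x - gaussWeight k y| * (K * |gaussBranch k y - gaussBranch 0 y|) :=
          mul_le_mul_of_nonneg_left
            (hfdist (gaussBranch_mem_Icc k hy.1) (gaussBranch_mem_Icc 0 hy.1)) (abs_nonneg _)
      _ = K * (|gaussWeight k x - gaussWeight k y| * |gaussBranch k y - gaussBranch 0 y|) :=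
          mul_left_comm _ _ _
      _ ≤ K * |x - y| * (gaussWeight k 1 / 2 - if k = 0 then 1 / 6 else 0) := by
          rw [mul_assoc]
          exact mul_le_mul_of_nonneg_left
            (abs_gaussWeight_sub_mul_abs_gaussBranch_sub_le k hx hy) K.coe_nonneg

lemma lipschitzOnWith_gaussTransfer {K : ℝ≥0} (hf : LipschitzOnWith K f (Icc 0 1)) :
    LipschitzOnWith (23 / 24 * K) (gaussTransfer f) (Icc 0 1) := by
  refine .of_dist_le_mul fun x hx y hy => ?_
  obtain ⟨B, hB⟩ := isCompact_Icc.exists_bound_of_continuousOn hf.continuousOn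
  have hbound : HasSum (fun k => K * |x - y| *
        ((gaussWeight k x / 4 + if k = 0 then 3 / 8 else 0) +
          (gaussWeight k 1 / 2 - if k = 0 then 1 / 6 else 0)))
      (K * |x - y| * ((1 / 4 + 3 / 8) + (1 / 2 - 1 / 6))) :=
    ((((hasSum_gaussWeight hx.1).div_const 4).add (hasSum_ite_eq 0 _)).add
      (((hasSum_gaussWeight zero_le_one).div_const 2).sub (hasSum_ite_eq 0 _))).mul_left _
  calc |gaussTransfer f x - gaussTransfer f y|
      ≤ K * |x - y| * ((1 / 4 + 3 / 8) + (1 / 2 - 1 / 6)) :=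
        (hasSum_gaussTransfer_sub hB hx.1 hy.1).norm_le_of_bounded hbound fun k =>
          abs_gaussTransfer_sub_summand_le hf k hx hy
    _ = (23 / 24 * K : ℝ≥0) * |x - y| := by
        push_cast
        ring

end Transfer

section SubGaussian

lemma hasSubgaussianMGF_of_lintegral_le {Ω : Type*} {mΩ : MeasurableSpace Ω} {μ : Measure Ω}
    {X : Ω → ℝ} {c : ℝ≥0} (hX : AEMeasurable X μ)
    (h : ∀ t, ∫⁻ ω, ENNReal.ofReal (Real.exp (t * X ω)) ∂μ ≤
      ENNReal.ofReal (Real.exp (c * t ^ 2 / 2))) : HasSubgaussianMGF X c μ := by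
  have hmeas (t : ℝ) : AEStronglyMeasurable (fun ω => Real.exp (t * X ω)) μ :=
    (hX.const_mul t).exp.aestronglyMeasurable
  have hnonneg (t : ℝ) : 0 ≤ᵐ[μ] fun ω => Real.exp (t * X ω) :=
    .of_forall fun _ => Real.exp_nonneg _
  refine ⟨fun t => ⟨hmeas t, ?_⟩, fun t => ?_⟩
  · rw [hasFiniteIntegral_iff_ofReal (hnonneg t)]
    exact (h t).trans_lt ENNReal.ofReal_lt_top
  · rw [mgf, integral_eq_lintegral_of_nonneg_ae (hnonneg t) (hmeas t)]
    exact ENNReal.toReal_le_of_le_ofReal (Real.exp_nonneg _) (h t)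

variable {Ω : Type*} {mΩ : MeasurableSpace Ω} {μ : Measure Ω} [IsFiniteMeasure μ]
  {X : ℕ → Ω → ℝ} {c : ℝ≥0}

lemma ae_eventually_lt_of_hasSubgaussianMGF (hc : 0 < c)
    (hX : ∀ N, HasSubgaussianMGF (X N) (N * c) μ) {ε : ℝ} (hε : 0 < ε) :
    ∀ᵐ ω ∂μ, ∀ᶠ N in atTop, X N ω < ε * N := by
  have hrate : -(ε ^ 2 / (2 * c)) < 0 := neg_neg_iff_pos.2 (by positivity)
  have htail (N : ℕ) : μ {ω | ε * N ≤ X N ω} ≤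
      ENNReal.ofReal (Real.exp (N * -(ε ^ 2 / (2 * c)))) := by
    rw [← ofReal_measureReal]
    refine ENNReal.ofReal_le_ofReal (((hX N).measure_ge_le (by positivity)).trans_eq ?_)
    rcases eq_or_ne N 0 with rfl | hN
    · simp
    · congr 1
      push_cast
      field_simp
  have hsum := (Real.summable_exp_nat_mul_iff.2 hrate).tsum_ofReal_ne_top
  filter_upwards [ae_eventually_notMem (ne_top_of_le_ne_top hsum (ENNReal.tsum_le_tsum htail))]
    with ω hω
  exact hω.mono fun N hN => not_le.1 hN

lemma ae_tendsto_inv_mul_of_hasSubgaussianMGF (hc : 0 < c)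
    (hX : ∀ N, HasSubgaussianMGF (X N) (N * c) μ) :
    ∀ᵐ ω ∂μ, Tendsto (fun N : ℕ => (N : ℝ)⁻¹ * X N ω) atTop (𝓝 0) := by
  have hupper (m : ℕ) := ae_eventually_lt_of_hasSubgaussianMGF hc hX
    (Nat.one_div_pos_of_nat (α := ℝ) (n := m))
  have hlower (m : ℕ) := ae_eventually_lt_of_hasSubgaussianMGF hc (fun N => (hX N).neg)
    (Nat.one_div_pos_of_nat (α := ℝ) (n := m))
  filter_upwards [ae_all_iff.2 hupper, ae_all_iff.2 hlower] with ω hωu hωl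
  rw [Metric.tendsto_nhds]
  intro ε hε
  obtain ⟨m, hm⟩ := exists_nat_one_div_lt hε
  filter_upwards [hωu m, hωl m, eventually_gt_atTop 0] with N hu hl hN
  rw [dist_zero_right, norm_mul, norm_inv, Real.norm_natCast, inv_mul_lt_iff₀ (by positivity),
    mul_comm]
  rw [Pi.neg_apply] at hl
  have : (1 / ((m : ℝ) + 1)) * N < ε * N := by gcongr
  exact abs_lt.2 ⟨by linarith, by linarith⟩

end SubGaussian

section Martingale

/-- The conditional law of `x` under the Gauss measure given that `gaussMap x = y`. -/
noncomputable def gaussFiberMeasure (y : ℝ) : Measure ℝ :=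
  .sum fun k => ENNReal.ofReal (gaussWeight k y) • .dirac (gaussBranch k y)

/-- The sum of the reverse martingale differences `h n xₙ - 𝔼[h n xₙ | xₙ₊₁]` for `n < N`, where
`xₙ = gaussMap^[n] x` is the Gauss orbit of `x`. -/
noncomputable def gaussMartingale (h : ℕ → ℝ → ℝ) (N : ℕ) (x : ℝ) : ℝ :=
  ∑ n ∈ Finset.range N, (h n (gaussMap^[n] x) - gaussTransfer (h n) (gaussMap^[n + 1] x))

variable {f : ℝ → ℝ} {h : ℕ → ℝ → ℝ} {C : ℝ≥0} {y : ℝ}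

lemma lintegral_gaussFiberMeasure (f : ℝ → ℝ≥0∞) (y : ℝ) :
    ∫⁻ x, f x ∂gaussFiberMeasure y =
      ∑' k, ENNReal.ofReal (gaussWeight k y) * f (gaussBranch k y) := by
  simp only [gaussFiberMeasure, lintegral_sum_measure, lintegral_smul_measure, lintegral_dirac,
    smul_eq_mul]

lemma isProbabilityMeasure_gaussFiberMeasure (hy : 0 ≤ y) :
    IsProbabilityMeasure (gaussFiberMeasure y) := by
  constructor
  have h := lintegral_gaussFiberMeasure 1 y
  simp only [Pi.one_apply, mul_one] at h
  rw [lintegral_one, ← ENNReal.ofReal_tsum_of_nonneg (fun k => gaussWeight_nonneg k hy)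
    (hasSum_gaussWeight hy).summable, (hasSum_gaussWeight hy).tsum_eq, ENNReal.ofReal_one] at h
  exact h

lemma ae_gaussFiberMeasure_mem_Icc (hy : 0 ≤ y) :
    ∀ᵐ x ∂gaussFiberMeasure y, x ∈ Icc (0 : ℝ) 1 := by
  refine Measure.ae_sum_iff.2 fun k => Measure.ae_smul_measure ?_ _
  rw [ae_dirac_eq]
  exact gaussBranch_mem_Icc k hy

lemma integral_gaussFiberMeasure (f : ℝ → ℝ) (hy : 0 ≤ y) :
    ∫ x, f x ∂gaussFiberMeasure y = gaussTransfer f y := by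
  rw [gaussFiberMeasure, integral_sum_dirac fun k => ENNReal.ofReal_ne_top, gaussTransfer]
  simp_rw [fun k => ENNReal.toReal_ofReal (gaussWeight_nonneg k hy), smul_eq_mul]

lemma hasSubgaussianMGF_sub_gaussTransfer (hfm : Measurable f)
    (hf : ∀ x ∈ Icc (0 : ℝ) 1, |f x| ≤ C) (hy : 0 ≤ y) :
    HasSubgaussianMGF (fun x => f x - gaussTransfer f y) (C ^ 2) (gaussFiberMeasure y) := by
  have := isProbabilityMeasure_gaussFiberMeasure hy
  have hoeffding := hasSubgaussianMGF_of_mem_Icc hfm.aemeasurable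
    ((ae_gaussFiberMeasure_mem_Icc hy).mono fun x hx => abs_le.1 (hf x hx))
  rw [integral_gaussFiberMeasure f hy] at hoeffding
  convert hoeffding using 1
  ext
  simp only [NNReal.coe_pow, NNReal.coe_div, coe_nnnorm, Real.norm_eq_abs, sq_abs, div_pow,
    NNReal.coe_ofNat]
  ring

lemma lintegral_exp_sub_gaussTransfer_le (hfm : Measurable f)
    (hf : ∀ x ∈ Icc (0 : ℝ) 1, |f x| ≤ C) (hy : 0 ≤ y) (t : ℝ) :
    ∫⁻ x, ENNReal.ofReal (Real.exp (t * (f x - gaussTransfer f y))) ∂gaussFiberMeasure y ≤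
      ENNReal.ofReal (Real.exp (C ^ 2 * t ^ 2 / 2)) := by
  have hsub := hasSubgaussianMGF_sub_gaussTransfer hfm hf hy
  rw [← ofReal_integral_eq_lintegral_ofReal (hsub.integrable_exp_mul t)
    (.of_forall fun _ => Real.exp_nonneg _)]
  exact ENNReal.ofReal_le_ofReal (by exact_mod_cast hsub.mgf_le t)

lemma measurable_gaussMartingale (hm : ∀ n, Measurable (h n)) (N : ℕ) :
    Measurable (gaussMartingale h N) :=
  Finset.measurable_sum _ fun n _ => ((hm n).comp (measurable_gaussMap.iterate n)).sub
    ((measurable_gaussTransfer (hm n)).comp (measurable_gaussMap.iterate (n + 1)))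

lemma gaussMartingale_succ_gaussBranch (h : ℕ → ℝ → ℝ) (N k : ℕ) (hy : y ∈ Ico (0 : ℝ) 1) :
    gaussMartingale h (N + 1) (gaussBranch k y) =
      (h 0 (gaussBranch k y) - gaussTransfer (h 0) y) +
        gaussMartingale (fun n => h (n + 1)) N y := by
  simp only [gaussMartingale, Finset.sum_range_succ', Function.iterate_succ_apply,
    Function.iterate_zero_apply, gaussMap_gaussBranch k hy, add_comm]

lemma lintegral_exp_gaussMartingale_le (hm : ∀ n, Measurable (h n))
    (hh : ∀ n, ∀ x ∈ Icc (0 : ℝ) 1, |h n x| ≤ C) (N : ℕ) (t : ℝ) :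
    ∫⁻ x, ENNReal.ofReal (Real.exp (t * gaussMartingale h N x)) ∂gaussMeasure ≤
      ENNReal.ofReal (Real.exp (C ^ 2 * t ^ 2 / 2)) ^ N := by
  induction N generalizing h with
  | zero => simp [gaussMartingale]
  | succ N ih =>
    have hshift := measurable_gaussMartingale (fun n => hm (n + 1)) N
    rw [lintegral_gaussMeasure_eq_tsum
      ((measurable_gaussMartingale hm (N + 1)).const_mul t).exp.ennreal_ofReal]
    calc ∫⁻ y, ∑' k, ENNReal.ofReal (gaussWeight k y) * ENNReal.ofReal
          (Real.exp (t * gaussMartingale h (N + 1) (gaussBranch k y))) ∂gaussMeasure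
        ≤ ∫⁻ y, ENNReal.ofReal (Real.exp (C ^ 2 * t ^ 2 / 2)) * ENNReal.ofReal
            (Real.exp (t * gaussMartingale (fun n => h (n + 1)) N y)) ∂gaussMeasure := by
          refine lintegral_mono_ae (ae_gaussMeasure_mem_Ioo.mono fun y hy => ?_)
          simp_rw [fun k => gaussMartingale_succ_gaussBranch h N k (Ioo_subset_Ico_self hy),
            mul_add, Real.exp_add, ENNReal.ofReal_mul (Real.exp_nonneg _), ← mul_assoc]
          rw [ENNReal.tsum_mul_right, ← lintegral_gaussFiberMeasure fun x =>
            ENNReal.ofReal (Real.exp (t * (h 0 x - gaussTransfer (h 0) y)))]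
          exact mul_le_mul' (lintegral_exp_sub_gaussTransfer_le (hm 0) (hh 0) hy.1.le t) le_rfl
      _ ≤ ENNReal.ofReal (Real.exp (C ^ 2 * t ^ 2 / 2)) ^ (N + 1) := by
          rw [lintegral_const_mul _ (hshift.const_mul t).exp.ennreal_ofReal,
            pow_succ' (ENNReal.ofReal _)]
          gcongr
          exact ih (fun n => hm (n + 1)) fun n => hh (n + 1)

lemma hasSubgaussianMGF_gaussMartingale (hm : ∀ n, Measurable (h n))
    (hh : ∀ n, ∀ x ∈ Icc (0 : ℝ) 1, |h n x| ≤ C) (N : ℕ) :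
    HasSubgaussianMGF (gaussMartingale h N) (N * C ^ 2) gaussMeasure := by
  refine hasSubgaussianMGF_of_lintegral_le (measurable_gaussMartingale hm N).aemeasurable
    fun t => (lintegral_exp_gaussMartingale_le hm hh N t).trans_eq ?_
  rw [← ENNReal.ofReal_pow (Real.exp_nonneg _), ← Real.exp_nat_mul]
  push_cast
  ring_nf

end Martingale

/-- A function that is `K`-Lipschitz on `[0, 1]` and has mean zero under the Gauss measure. -/
structure IsCenteredLipschitz (K : ℝ≥0) (f : ℝ → ℝ) : Prop where
  measurable : Measurable f
  lipschitzOnWith : LipschitzOnWith K f (Icc 0 1)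
  integral_eq_zero : ∫ x, f x ∂gaussMeasure = 0

namespace IsCenteredLipschitz

variable {K K' : ℝ≥0} {f g : ℝ → ℝ}

lemma abs_le (hf : IsCenteredLipschitz K f) : ∀ x ∈ Icc (0 : ℝ) 1, |f x| ≤ K := by
  intro x hx
  obtain ⟨B, hB⟩ := isCompact_Icc.exists_bound_of_continuousOn hf.lipschitzOnWith.continuousOn
  have hmean : ∫ y, (f x - f y) ∂gaussMeasure = f x := by
    rw [integral_sub (integrable_const _) (integrable_gaussMeasure_of_abs_le hf.measurable hB),
      hf.integral_eq_zero]
    simp only [integral_const, probReal_univ, one_smul, sub_zero]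
  have hosc : ∀ᵐ y ∂gaussMeasure, ‖f x - f y‖ ≤ K := by
    filter_upwards [ae_gaussMeasure_mem_Icc] with y hy
    exact (hf.lipschitzOnWith.dist_le_mul x hx y hy).trans
      (mul_le_of_le_one_right K.coe_nonneg (Real.dist_le_of_mem_Icc_01 hx hy))
  simpa only [hmean, Real.norm_eq_abs, probReal_univ, mul_one] using
    norm_integral_le_of_norm_le_const hosc

lemma gaussTransfer (hf : IsCenteredLipschitz K f) :
    IsCenteredLipschitz (23 / 24 * K) (gaussTransfer f) where
  measurable := measurable_gaussTransfer hf.measurable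
  lipschitzOnWith := lipschitzOnWith_gaussTransfer hf.lipschitzOnWith
  integral_eq_zero := (integral_gaussTransfer hf.measurable hf.abs_le).trans hf.integral_eq_zero

lemma zero : IsCenteredLipschitz K fun _ => 0 where
  measurable := measurable_const
  lipschitzOnWith := (LipschitzWith.const' 0).lipschitzOnWith
  integral_eq_zero := integral_zero _ _

lemma const_mul_add (hf : IsCenteredLipschitz K f) (hg : IsCenteredLipschitz K' g) {c : ℝ}
    (hc : |c| ≤ 1) : IsCenteredLipschitz (K + K') fun x => c * f x + g x where
  measurable := (hf.measurable.const_mul c).add hg.measurable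
  lipschitzOnWith := by
    refine LipschitzOnWith.add (.of_dist_le_mul fun x hx y hy => ?_) hg.lipschitzOnWith
    rw [Real.dist_eq, ← mul_sub, abs_mul]
    exact (mul_le_of_le_one_left (abs_nonneg _) hc).trans
      (hf.lipschitzOnWith.dist_le_mul x hx y hy)
  integral_eq_zero := by
    rw [integral_add
      ((integrable_gaussMeasure_of_abs_le hf.measurable hf.abs_le).const_mul c)
      (integrable_gaussMeasure_of_abs_le hg.measurable hg.abs_le), integral_const_mul,
      hf.integral_eq_zero, hg.integral_eq_zero, mul_zero, add_zero]

end IsCenteredLipschitz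

section WeightedAverages

/-- The corrector `∑_{m < n} w m • T^[n - 1 - m] ψ`, where `T` is `gaussTransfer`. With `ψ = T φ`
it turns the weighted orbit sums of `φ` into martingale sums. -/
noncomputable def gaussCorrector (ψ : ℝ → ℝ) (w : ℕ → ℝ) : ℕ → ℝ → ℝ
  | 0 => fun _ => 0
  | n + 1 => fun y => w n * ψ y + gaussTransfer (gaussCorrector ψ w n) y

variable {φ ψ : ℝ → ℝ} {w : ℕ → ℝ} {C K : ℝ≥0}

lemma isCenteredLipschitz_gaussCorrector (hψ : IsCenteredLipschitz K ψ) (hw : ∀ n, |w n| ≤ 1)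
    (n : ℕ) : IsCenteredLipschitz (24 * K) (gaussCorrector ψ w n) := by
  induction n with
  | zero => exact .zero
  | succ n ih =>
    have hfixed : K + 23 / 24 * (24 * K) = 24 * K := by
      ext
      push_cast
      ring
    exact hfixed ▸ hψ.const_mul_add ih.gaussTransfer (hw n)

lemma sum_mul_gaussMap_iterate_eq (hφ : ∀ x ∈ Icc (0 : ℝ) 1, |φ x| ≤ C)
    (hψ : IsCenteredLipschitz K ψ) (hφψ : EqOn (gaussTransfer φ) ψ (Ico 0 1))
    (hw : ∀ n, |w n| ≤ 1) (N : ℕ) (x : ℝ) :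
    ∑ n ∈ Finset.range N, w n * φ (gaussMap^[n] x) =
      gaussMartingale (fun n y => w n * φ y + gaussCorrector ψ w n y) N x +
        gaussCorrector ψ w N (gaussMap^[N] x) := by
  have htransfer (n : ℕ) {y : ℝ} (hy : y ∈ Ico (0 : ℝ) 1) :
      gaussTransfer (fun y => w n * φ y + gaussCorrector ψ w n y) y =
        gaussCorrector ψ w (n + 1) y := by
    rw [gaussTransfer_const_mul_add hφ (isCenteredLipschitz_gaussCorrector hψ hw n).abs_le _ hy.1,
      hφψ hy, gaussCorrector]
  induction N with
  | zero => simp [gaussMartingale, gaussCorrector]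
  | succ N ih =>
    have horbit : gaussMap^[N + 1] x ∈ Ico (0 : ℝ) 1 := by
      rw [Function.iterate_succ_apply']
      exact gaussMap_mem_Ico _
    rw [Finset.sum_range_succ, ih, gaussMartingale, gaussMartingale, Finset.sum_range_succ,
      htransfer N horbit]
    ring

lemma ae_tendsto_inv_mul_sum_gaussMap_iterate {w : ℕ → ℕ → ℝ} (hφm : Measurable φ)
    (hφ : ∀ x ∈ Icc (0 : ℝ) 1, |φ x| ≤ C) (hψ : IsCenteredLipschitz K ψ)
    (hφψ : EqOn (gaussTransfer φ) ψ (Ico 0 1)) (hw : ∀ N n, |w N n| ≤ 1) :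
    ∀ᵐ x ∂gaussMeasure, Tendsto
      (fun N : ℕ => (N : ℝ)⁻¹ * ∑ n ∈ Finset.range N, w N n * φ (gaussMap^[n] x)) atTop (𝓝 0) := by
  have hcorr (N n : ℕ) := isCenteredLipschitz_gaussCorrector hψ (hw N) n
  have hbound (N n : ℕ) : ∀ x ∈ Icc (0 : ℝ) 1,
      |w N n * φ x + gaussCorrector ψ (w N) n x| ≤ (C + 24 * K + 1 : ℝ≥0) := by
    intro x hx
    have hwφ : |w N n * φ x| ≤ C := by
      rw [abs_mul]
      exact (mul_le_of_le_one_left (abs_nonneg _) (hw N n)).trans (hφ x hx)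
    have h := (abs_add_le _ _).trans (add_le_add hwφ ((hcorr N n).abs_le x hx))
    push_cast at h ⊢
    linarith
  have hmart (N : ℕ) := hasSubgaussianMGF_gaussMartingale
    (h := fun n y => w N n * φ y + gaussCorrector ψ (w N) n y)
    (fun n => (hφm.const_mul (w N n)).add (hcorr N n).measurable) (hbound N) N
  filter_upwards [ae_tendsto_inv_mul_of_hasSubgaussianMGF (by positivity) hmart,
    ae_gaussMeasure_mem_Icc] with x hx hx01
  have horbit (N : ℕ) : gaussMap^[N] x ∈ Icc (0 : ℝ) 1 :=
    MapsTo.iterate (fun y _ => Ico_subset_Icc_self (gaussMap_mem_Ico y)) N hx01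
  have hcorrector : Tendsto
      (fun N : ℕ => (N : ℝ)⁻¹ * gaussCorrector ψ (w N) N (gaussMap^[N] x)) atTop (𝓝 0) :=
    (tendsto_inv_atTop_zero.comp tendsto_natCast_atTop_atTop).zero_mul_isBoundedUnder_le
      (isBoundedUnder_of ⟨_, fun N => (hcorr N N).abs_le _ (horbit N)⟩)
  simp_rw [fun N => sum_mul_gaussMap_iterate_eq hφ hψ hφψ (hw N) N x, mul_add]
  simpa only [add_zero] using hx.add hcorrector

end WeightedAverages

section Digits

/-- The indicator that the first partial quotient of `x` is `k`, minus its mean under the Gauss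
measure. -/
noncomputable def centeredDigit (k : ℕ) (x : ℝ) : ℝ :=
  (if ⌊x⁻¹⌋ = k then 1 else 0) - gaussKuzminFreq k

lemma gaussKuzminFreq_succ_mem_Icc (k : ℕ) : gaussKuzminFreq (k + 1) ∈ Icc (0 : ℝ) 1 := by
  rw [← integral_gaussWeight k]
  refine ⟨integral_nonneg_of_ae (ae_gaussMeasure_mem_Icc.mono fun y hy =>
    gaussWeight_nonneg k hy.1), ?_⟩
  have hle : ∀ᵐ y ∂gaussMeasure, ‖gaussWeight k y‖ ≤ 1 := by
    filter_upwards [ae_gaussMeasure_mem_Icc] with y hy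
    rw [Real.norm_of_nonneg (gaussWeight_nonneg k hy.1)]
    exact gaussWeight_le_one k hy.1
  simpa using (le_abs_self _).trans (norm_integral_le_of_norm_le_const hle)

lemma measurable_centeredDigit (k : ℕ) : Measurable (centeredDigit k) :=
  (Measurable.ite (measurable_inv.floor (measurableSet_singleton _)) measurable_const
    measurable_const).sub_const _

lemma abs_centeredDigit_succ_le (k : ℕ) (x : ℝ) : |centeredDigit (k + 1) x| ≤ 1 := by
  refine Real.dist_le_of_mem_Icc_01 ?_ (gaussKuzminFreq_succ_mem_Icc k)
  split_ifs <;> norm_num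

lemma gaussTransfer_centeredDigit_succ (k : ℕ) :
    EqOn (gaussTransfer (centeredDigit (k + 1)))
      (fun y => gaussWeight k y - gaussKuzminFreq (k + 1)) (Ico 0 1) := by
  intro y hy
  have hdigit (i : ℕ) : gaussWeight i y * centeredDigit (k + 1) (gaussBranch i y) =
      (if i = k then gaussWeight k y else 0) - gaussWeight i y * gaussKuzminFreq (k + 1) := by
    rw [centeredDigit, floor_inv_gaussBranch i hy, mul_sub]
    push_cast
    simp only [add_left_inj, Nat.cast_inj, mul_ite, mul_one, mul_zero]
    split_ifs with h
    · rw [h]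
    · rfl
  rw [gaussTransfer]
  simp_rw [hdigit]
  simpa only [one_mul] using ((hasSum_ite_eq k (gaussWeight k y)).sub
    ((hasSum_gaussWeight hy.1).mul_right (gaussKuzminFreq (k + 1)))).tsum_eq

lemma isCenteredLipschitz_gaussWeight_sub (k : ℕ) :
    IsCenteredLipschitz 1 fun y => gaussWeight k y - gaussKuzminFreq (k + 1) where
  measurable := (measurable_gaussWeight k).sub_const _
  lipschitzOnWith := by
    refine .of_dist_le_mul fun x hx y hy => ?_
    rw [dist_sub_right, NNReal.coe_one, one_mul]
    exact abs_gaussWeight_sub_le k hx hy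
  integral_eq_zero := by
    have hint : Integrable (gaussWeight k) gaussMeasure :=
      integrable_gaussMeasure_of_abs_le (measurable_gaussWeight k) fun y hy => by
        rw [abs_of_nonneg (gaussWeight_nonneg k hy.1)]
        exact gaussWeight_le_one k hy.1
    rw [integral_sub hint (integrable_const _), integral_gaussWeight, integral_const,
      probReal_univ, one_smul, sub_self]

lemma ae_tendsto_inv_mul_sum_centeredDigit (k : ℕ) {w : ℕ → ℕ → ℝ} (hw : ∀ N n, |w N n| ≤ 1) :
    ∀ᵐ x ∂gaussMeasure, Tendsto (fun N : ℕ =>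
      (N : ℝ)⁻¹ * ∑ n ∈ Finset.range N, w N n * centeredDigit (k + 1) (gaussMap^[n] x))
      atTop (𝓝 0) :=
  ae_tendsto_inv_mul_sum_gaussMap_iterate (C := 1) (measurable_centeredDigit _)
    (fun x _ => abs_centeredDigit_succ_le k x) (isCenteredLipschitz_gaussWeight_sub k)
    (gaussTransfer_centeredDigit_succ k) hw

end Digits

section QuadraticResidues

variable (p : ℕ) [Fact p.Prime]

lemma legendre_eq_quadraticChar (n : ℕ) : legendre p n = quadraticChar (ZMod p) n := by
  rw [quadraticChar_apply, quadraticCharFun, legendre]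
  congr

variable {p}

lemma sum_range_legendre (hp : p ≠ 2) : ∑ n ∈ Finset.range p, legendre p n = 0 := by
  rw [← quadraticChar_sum_zero (F := ZMod p) (by rwa [ZMod.ringChar_zmod_n])]
  exact Finset.sum_nbij' (fun n => (n : ZMod p)) ZMod.val (fun _ _ => Finset.mem_univ _)
    (fun a _ => Finset.mem_range.2 a.val_lt)
    (fun n hn => ZMod.val_cast_of_lt (Finset.mem_range.1 hn))
    (fun a _ => ZMod.natCast_zmod_val a) fun n _ => legendre_eq_quadraticChar p n

lemma two_mul_card_filter_legendre_eq_one (hp : p ≠ 2) :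
    2 * ((Finset.Ico 1 p).filter fun n => legendre p n = 1).card = p - 1 := by
  have hpos : 0 < p := (Fact.out : p.Prime).pos
  have hsymbol : ∀ n ∈ Finset.Ico 1 p,
      legendre p n = 2 * (if legendre p n = 1 then 1 else 0) - 1 := by
    intro n hn
    rw [Finset.mem_Ico] at hn
    have hn0 : (n : ZMod p) ≠ 0 := by
      rw [Ne, ZMod.natCast_eq_zero_iff]
      exact Nat.not_dvd_of_pos_of_lt hn.1 hn.2
    rw [legendre_eq_quadraticChar]
    rcases quadraticChar_dichotomy hn0 with h | h <;> rw [h] <;> norm_num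
  have hsum := sum_range_legendre hp
  rw [Finset.range_eq_Ico, Finset.sum_eq_sum_Ico_succ_bot hpos, legendre, Nat.cast_zero,
    if_pos rfl, zero_add, zero_add, Finset.sum_congr rfl hsymbol, Finset.sum_sub_distrib,
    ← Finset.mul_sum, Finset.sum_boole, Finset.sum_const, Nat.card_Ico] at hsum
  simp only [nsmul_eq_mul, mul_one] at hsum
  omega

lemma sum_Ico_eq_sum_range_legendre (f : ℕ → ℝ) :
    ∑ n ∈ Finset.Ico 1 p, (if legendre p n = 1 then f n else 0) =
      ∑ n ∈ Finset.range p, if legendre p (n + 1) = 1 then f (n + 1) else 0 := by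
  have hpos : 1 ≤ p := (Fact.out : p.Prime).one_le
  have hlast : legendre p p ≠ 1 := by
    rw [legendre, ZMod.natCast_self, if_pos rfl]
    exact zero_ne_one
  rw [Finset.range_eq_Ico, Finset.sum_Ico_add' (fun n => if legendre p n = 1 then f n else 0),
    zero_add, Finset.sum_Ico_succ_top hpos, if_neg hlast, add_zero]

lemma card_filter_legendre_partialQuotient (hp : p ≠ 2) (k : ℕ) (x : ℝ) :
    (((Finset.Ico 1 p).filter fun n => legendre p n = 1 ∧ partialQuotient n x = k).card : ℝ) =
      ∑ n ∈ Finset.range p,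
          (if legendre p (n + 1) = 1 then 1 else 0) * centeredDigit k (gaussMap^[n] x) +
        (p - 1) / 2 * gaussKuzminFreq k := by
  have hcount : (((p : ℝ) - 1) / 2) =
      ∑ n ∈ Finset.Ico 1 p, if legendre p n = 1 then (1 : ℝ) else 0 := by
    have h := congrArg (Nat.cast (R := ℝ)) (two_mul_card_filter_legendre_eq_one hp)
    rw [Nat.cast_mul, Nat.cast_sub (Fact.out : p.Prime).one_le] at h
    rw [Finset.sum_boole]
    push_cast at h
    linarith
  have hdigit (n : ℕ) : (if partialQuotient (n + 1) x = k then (1 : ℝ) else 0) =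
      centeredDigit k (gaussMap^[n] x) + gaussKuzminFreq k := by
    rw [centeredDigit, sub_add_cancel, partialQuotient, Nat.add_sub_cancel]
  rw [← Finset.sum_boole]
  simp_rw [ite_and]
  rw [sum_Ico_eq_sum_range_legendre fun n => if partialQuotient n x = k then 1 else 0, hcount,
    sum_Ico_eq_sum_range_legendre fun _ => 1, Finset.sum_mul, ← Finset.sum_add_distrib]
  simp_rw [hdigit, ← mul_add, ite_mul, one_mul, zero_mul]

end QuadraticResidues

theorem legendre_continued_fraction_average_general (k : ℕ) (hk : 1 ≤ k) :
    ∀ᵐ x ∂(volume.restrict (Ioo (0 : ℝ) 1)),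
      Tendsto
        (fun p : ℕ => (p : ℝ)⁻¹ *
          ((Finset.Ico 1 p).filter fun n => legendre p n = 1 ∧ partialQuotient n x = k).card)
        (atTop ⊓ 𝓟 {p | p.Prime})
        (𝓝 ((2 * Real.log 2)⁻¹ * Real.log (((k : ℝ) + 1) ^ 2 / ((k : ℝ) * ((k : ℝ) + 2))))) := by
  obtain ⟨k, rfl⟩ := Nat.exists_eq_add_of_le' hk
  have hweight (p n : ℕ) : |(if legendre p (n + 1) = 1 then 1 else 0 : ℝ)| ≤ 1 := by
    split_ifs <;> norm_num
  filter_upwards [absolutelyContinuous_gaussMeasure.ae_le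
    (ae_tendsto_inv_mul_sum_centeredDigit k hweight)] with x hx
  have hmain : Tendsto (fun p : ℕ => (1 - (p : ℝ)⁻¹) / 2 * gaussKuzminFreq (k + 1)) atTop
      (𝓝 ((1 - 0) / 2 * gaussKuzminFreq (k + 1))) :=
    (((tendsto_inv_atTop_zero.comp tendsto_natCast_atTop_atTop).const_sub 1).div_const 2).mul_const
      _
  convert ((hx.add hmain).mono_left inf_le_left).congr' ?_ using 2
  · rw [gaussKuzminFreq]
    ring
  filter_upwards [mem_inf_of_right (mem_principal_self _),
    mem_inf_of_left (eventually_gt_atTop 2)] with p hp hp2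
  have : Fact p.Prime := ⟨hp⟩
  have hp0 : (p : ℝ) ≠ 0 := Nat.cast_ne_zero.2 hp.ne_zero
  rw [card_filter_legendre_partialQuotient hp2.ne']
  field_simp

open scoped Classical in
/-- Fix `k ≥ 1`. For Lebesgue-almost every `x ∈ (0,1)` and every sparse infinite set `P`
of primes, `(1/p)·#{1 ≤ n < p : (n/p) = 1 and aₙ(x) = k}` converges, as `p → ∞` along `P`,
to `(1/(2 log 2)) log((k+1)²/(k(k+2)))`. -/
theorem legendre_continued_fraction_average (k : ℕ) (hk : 1 ≤ k) :
    ∀ᵐ x ∂(MeasureTheory.volume.restrict (Set.Ioo (0:ℝ) 1)),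
      ∀ P : Set ℕ, (∀ p ∈ P, p.Prime) → P.Infinite →
        (Summable fun p : P => (Real.log p) ^ 2 / p) →
        Tendsto
          (fun p : ℕ =>
            (p : ℝ)⁻¹ *
              ((Finset.Ico 1 p).filter
                (fun n => legendre p n = 1 ∧ partialQuotient n x = k)).card)
          (atTop ⊓ 𝓟 P)
          (nhds ((2 * Real.log 2)⁻¹ *
            Real.log (((k : ℝ) + 1) ^ 2 / ((k : ℝ) * ((k : ℝ) + 2))))) := by
  filter_upwards [legendre_continued_fraction_average_general k hk] with x hx P hP _ _
  exact hx.mono_left (inf_le_inf_left _ (principal_mono.2 hP))
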